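/- arXiv:2405.02776 — 2 statements merged into one kernel-verified Lean document; each statement's English description precedes it below -/
import Mathlib

section
/- The infinite series identity 5π/(4√3) = Σ_{k=0}^{∞} (1/4)^k · [(1/3)_k (1)_k (5/3)_k] / [(7/6)_k (3/2)_k (11/6)_k] · (3k + 2) holds, where the sum is over natural numbers k and all quantities are real numbers. -/
noncomputable def risingFactorial (a : ℝ) (k : ℕ) : ℝ := ∏ i ∈ Finset.range k, (a + i)

/-!
By the triplication formula for Pochhammer symbols and Wallis' evaluation of
`W n = ∫ s in -1..1, (1 - s²)ⁿ`, the `k`-th term of the series is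
`5/4 · 4⁻ᵏ · (W (3k) - W (3k+1) / 2 + W (3k+2) / 4)`. With `u = 1 - s²`, summing the geometric
series of ratio `u³/4` under the integral leaves `5/4 · ∫ (4 - 2u + u²) / (4 - u³)` over
`[-1, 1]`. Since `4 - u³ = |z(s)|²` for the curve `z(s) = √3 (1 - s²) + i (3s - s³)`, the integrand
is `1/√3` times the angular velocity of `z`, whose argument runs from `-π/2` to `π/2`.
-/

open MeasureTheory Real
open scoped Interval

lemma hasSum_intervalIntegral_mul_pow {𝕜 : Type*} [RCLike 𝕜] {μ : Measure ℝ}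
    [IsLocallyFiniteMeasure μ] {a b : ℝ} {f r : ℝ → 𝕜} (hf : ContinuousOn f [[a, b]])
    (hr : ContinuousOn r [[a, b]]) (hr_lt : ∀ t ∈ [[a, b]], ‖r t‖ < 1) :
    HasSum (fun n : ℕ ↦ ∫ t in a..b, f t * r t ^ n ∂μ) (∫ t in a..b, f t / (1 - r t) ∂μ) := by
  refine intervalIntegral.hasSum_integral_of_dominated_convergence
    (fun n t ↦ ‖f t‖ * ‖r t‖ ^ n) (fun n ↦ ?_) (fun n ↦ ?_) ?_ ?_ ?_
  · exact ((hf.mul (hr.pow n)).mono Set.uIoc_subset_uIcc).aestronglyMeasurable measurableSet_uIoc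
  · exact .of_forall fun t _ ↦ by rw [norm_mul, norm_pow]
  · exact .of_forall fun t ht ↦ (summable_geometric_of_lt_one (norm_nonneg _)
      (hr_lt t (Set.uIoc_subset_uIcc ht))).mul_left _
  · have geometric : Set.EqOn (fun t ↦ ∑' n : ℕ, ‖f t‖ * ‖r t‖ ^ n)
        (fun t ↦ ‖f t‖ * (1 - ‖r t‖)⁻¹) [[a, b]] := fun t ht ↦ by
      simp only [tsum_mul_left, tsum_geometric_of_lt_one (norm_nonneg _) (hr_lt t ht)]
    refine (ContinuousOn.congr ?_ geometric).intervalIntegrable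
    exact hf.norm.mul ((continuousOn_const.sub hr.norm).inv₀ fun t ht ↦
      (sub_pos.mpr (hr_lt t ht)).ne')
  · refine .of_forall fun t ht ↦ ?_
    rw [div_eq_mul_inv]
    exact (hasSum_geometric_of_norm_lt_one (hr_lt t (Set.uIoc_subset_uIcc ht))).mul_left _

lemma hasDerivAt_arg {z : ℝ → ℂ} {z' : ℂ} {t : ℝ} (hz : HasDerivAt z z' t)
    (hslit : z t ∈ Complex.slitPlane) :
    HasDerivAt (fun t ↦ (z t).arg) (z' / z t).im t := by
  simpa only [Function.comp_def, Complex.imCLM_apply, Complex.log_im] using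
    Complex.imCLM.hasFDerivAt.comp_hasDerivAt t (hz.clog_real hslit)

lemma integral_im_deriv_div {z z' : ℝ → ℂ} {a b : ℝ} (hz : ∀ t ∈ [[a, b]], HasDerivAt z (z' t) t)
    (hz' : ContinuousOn z' [[a, b]]) (hslit : ∀ t ∈ [[a, b]], z t ∈ Complex.slitPlane) :
    ∫ t in a..b, (z' t / z t).im = (z b).arg - (z a).arg := by
  refine intervalIntegral.integral_eq_sub_of_hasDerivAt
    (fun t ht ↦ hasDerivAt_arg (hz t ht) (hslit t ht)) (ContinuousOn.intervalIntegrable ?_)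
  have hz_cont : ContinuousOn z [[a, b]] := fun t ht ↦ (hz t ht).continuousAt.continuousWithinAt
  exact Complex.continuous_im.comp_continuousOn
    (hz'.div hz_cont fun t ht ↦ Complex.slitPlane_ne_zero (hslit t ht))

lemma risingFactorial_pos {a : ℝ} (ha : 0 < a) (k : ℕ) : 0 < risingFactorial a k :=
  Finset.prod_pos fun i _ ↦ by positivity

lemma risingFactorial_add (a : ℝ) (m n : ℕ) :
    risingFactorial a (m + n) = risingFactorial a m * risingFactorial (a + m) n := by
  simp only [risingFactorial, Finset.prod_range_add, Nat.cast_add, add_assoc]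

lemma risingFactorial_succ (a : ℝ) (k : ℕ) :
    risingFactorial a (k + 1) = risingFactorial a k * (a + k) :=
  Finset.prod_range_succ _ k

lemma mul_risingFactorial_add_one (a : ℝ) (k : ℕ) :
    a * risingFactorial (a + 1) k = risingFactorial a k * (a + k) := by
  rw [← risingFactorial_succ, add_comm k 1, risingFactorial_add]
  simp [risingFactorial]

lemma risingFactorial_mul (a : ℝ) (m n : ℕ) :
    risingFactorial a (m * n) =
      m ^ (m * n) * ∏ j ∈ Finset.range m, risingFactorial ((a + j) / m) n := by
  rcases eq_or_ne m 0 with rfl | hm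
  · simp [risingFactorial]
  have hm_cast : (m : ℝ) ≠ 0 := Nat.cast_ne_zero.mpr hm
  induction n with
  | zero => simp [risingFactorial]
  | succ n ih =>
    have block : risingFactorial (a + (m * n : ℕ)) m =
        m ^ m * ∏ j ∈ Finset.range m, ((a + j) / m + n) := by
      have distribute := Finset.pow_card_mul_prod (s := Finset.range m) (b := (m : ℝ))
        (f := fun j ↦ (a + j) / m + n)
      rw [Finset.card_range] at distribute
      rw [distribute]
      refine Finset.prod_congr rfl fun j _ ↦ ?_
      push_cast
      field_simp
      ring
    simp only [risingFactorial_succ, Finset.prod_mul_distrib]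
    rw [Nat.mul_succ, risingFactorial_add, ih, block, pow_add]
    ring

/-- The symmetric Wallis integral `∫ s in -1..1, (1 - s²)ⁿ`, that is,
`∫ θ in 0..π, sin θ ^ (2n + 1)`; it turns the quotients `(1)ₙ / (3/2)ₙ` into integrals. -/
noncomputable def wallisIntegral (n : ℕ) : ℝ := ∫ s in (-1 : ℝ)..1, (1 - s ^ 2) ^ n

lemma wallisIntegral_eq_prod (n : ℕ) :
    wallisIntegral n = 2 * ∏ i ∈ Finset.range n, (2 * (i : ℝ) + 2) / (2 * i + 3) := by
  rw [← integral_sin_pow_odd]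
  simpa [wallisIntegral] using (integral_sin_pow_odd_mul_cos_pow (a := 0) (b := π) n 0).symm

lemma wallisIntegral_succ (n : ℕ) :
    wallisIntegral (n + 1) = (2 * n + 2) / (2 * n + 3) * wallisIntegral n := by
  simp only [wallisIntegral_eq_prod, Finset.prod_range_succ]
  ring

lemma wallisIntegral_eq_risingFactorial_div (n : ℕ) :
    wallisIntegral n = 2 * (risingFactorial 1 n / risingFactorial (3 / 2) n) := by
  rw [wallisIntegral_eq_prod, risingFactorial, risingFactorial, ← Finset.prod_div_distrib]
  congr 1
  refine Finset.prod_congr rfl fun i _ ↦ ?_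
  field_simp
  ring

lemma wallisIntegral_three_mul (k : ℕ) :
    wallisIntegral (3 * k) = 2 * (risingFactorial (1 / 3) k * risingFactorial (2 / 3) k *
      risingFactorial 1 k / (risingFactorial (1 / 2) k * risingFactorial (5 / 6) k *
        risingFactorial (7 / 6) k)) := by
  have triple (a : ℝ) := risingFactorial_mul a 3 k
  rw [wallisIntegral_eq_risingFactorial_div, triple, triple, mul_div_mul_left _ _ (by positivity)]
  norm_num [Finset.prod_range_succ]

lemma risingFactorial_ratio_eq_wallisIntegral (k : ℕ) :
    risingFactorial (1 / 3) k * risingFactorial 1 k * risingFactorial (5 / 3) k /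
        (risingFactorial (7 / 6) k * risingFactorial (3 / 2) k * risingFactorial (11 / 6) k) =
      5 * (3 * k + 2) / (4 * (2 * k + 1) * (6 * k + 5)) * wallisIntegral (3 * k) := by
  have shift {a b : ℝ} (ha : a ≠ 0) (hab : a + 1 = b) :
      risingFactorial b k = risingFactorial a k * (a + k) / a := by
    rw [← hab, ← mul_risingFactorial_add_one, mul_div_cancel_left₀ _ ha]
  rw [wallisIntegral_three_mul, shift (a := 2 / 3) (b := 5 / 3) (by norm_num) (by norm_num),
    shift (a := 1 / 2) (b := 3 / 2) (by norm_num) (by norm_num),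
    shift (a := 5 / 6) (b := 11 / 6) (by norm_num) (by norm_num)]
  have pos_one_half := risingFactorial_pos (a := 1 / 2) (by norm_num) k
  have pos_five_sixths := risingFactorial_pos (a := 5 / 6) (by norm_num) k
  have pos_seven_sixths := risingFactorial_pos (a := 7 / 6) (by norm_num) k
  field_simp
  ring

lemma wallisIntegral_sub_add (n : ℕ) :
    wallisIntegral n - wallisIntegral (n + 1) / 2 + wallisIntegral (n + 2) / 4 =
      3 * (n + 2) ^ 2 / ((2 * n + 3) * (2 * n + 5)) * wallisIntegral n := by
  simp only [wallisIntegral_succ]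
  push_cast
  field_simp
  ring

lemma integral_mul_pow_eq_wallisIntegral (k : ℕ) :
    ∫ s in (-1 : ℝ)..1,
        (1 - (1 - s ^ 2) / 2 + (1 - s ^ 2) ^ 2 / 4) * ((1 - s ^ 2) ^ 3 / 4) ^ k =
      (1 / 4) ^ k * (wallisIntegral (3 * k) - wallisIntegral (3 * k + 1) / 2 +
        wallisIntegral (3 * k + 2) / 4) := by
  have expand (s : ℝ) :
      (1 - (1 - s ^ 2) / 2 + (1 - s ^ 2) ^ 2 / 4) * ((1 - s ^ 2) ^ 3 / 4) ^ k =
        (1 / 4) ^ k * ((1 - s ^ 2) ^ (3 * k) - (1 - s ^ 2) ^ (3 * k + 1) / 2 +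
          (1 - s ^ 2) ^ (3 * k + 2) / 4) := by
    rw [div_eq_mul_one_div (_ ^ 3), mul_pow, ← pow_mul]
    ring
  have integrable (n : ℕ) :
      IntervalIntegrable (fun s : ℝ ↦ (1 - s ^ 2) ^ n) volume (-1) 1 :=
    Continuous.intervalIntegrable (by fun_prop) _ _
  simp only [expand, wallisIntegral, intervalIntegral.integral_const_mul]
  rw [intervalIntegral.integral_add ((integrable _).sub ((integrable _).div_const _))
      ((integrable _).div_const _),
    intervalIntegral.integral_sub (integrable _) ((integrable _).div_const _),
    intervalIntegral.integral_div, intervalIntegral.integral_div]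

lemma summand_eq_integral (k : ℕ) :
    (1 / 4 : ℝ) ^ k *
        (risingFactorial (1 / 3) k * risingFactorial 1 k * risingFactorial (5 / 3) k) /
        (risingFactorial (7 / 6) k * risingFactorial (3 / 2) k * risingFactorial (11 / 6) k) *
        (3 * (k : ℝ) + 2) =
      5 / 4 * ∫ s in (-1 : ℝ)..1,
        (1 - (1 - s ^ 2) / 2 + (1 - s ^ 2) ^ 2 / 4) * ((1 - s ^ 2) ^ 3 / 4) ^ k := by
  rw [integral_mul_pow_eq_wallisIntegral, wallisIntegral_sub_add, mul_div_assoc,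
    risingFactorial_ratio_eq_wallisIntegral]
  push_cast
  field_simp
  ring

/-- The plane cubic `s ↦ √3 (1 - s²) + i (3s - s³)`, chosen so that
`|z(s)|² = 4 - (1 - s²)³`. -/
noncomputable def cubicCurve (s : ℝ) : ℂ := ⟨√3 * (1 - s ^ 2), 3 * s - s ^ 3⟩

lemma normSq_cubicCurve (s : ℝ) : Complex.normSq (cubicCurve s) = 4 - (1 - s ^ 2) ^ 3 := by
  rw [cubicCurve, Complex.normSq_mk]
  linear_combination (1 - s ^ 2) ^ 2 * Real.sq_sqrt (show (0 : ℝ) ≤ 3 by norm_num)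

lemma hasDerivAt_cubicCurve (s : ℝ) :
    HasDerivAt cubicCurve ⟨-(2 * √3 * s), 3 - 3 * s ^ 2⟩ s := by
  have hre : HasDerivAt (fun s : ℝ ↦ √3 * (1 - s ^ 2)) (-(2 * √3 * s)) s :=
    (((hasDerivAt_pow 2 s).const_sub 1).const_mul √3).congr_deriv (by norm_num; ring)
  have him : HasDerivAt (fun s : ℝ ↦ 3 * s - s ^ 3) (3 - 3 * s ^ 2) s :=
    (((hasDerivAt_id s).const_mul 3).sub (hasDerivAt_pow 3 s)).congr_deriv (by norm_num)
  have hcurve : cubicCurve = fun s ↦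
      ((√3 * (1 - s ^ 2) : ℝ) : ℂ) + ((3 * s - s ^ 3 : ℝ) : ℂ) * Complex.I :=
    funext fun s ↦ Complex.mk_eq_add_mul_I _ _
  rw [hcurve, Complex.mk_eq_add_mul_I]
  exact hre.ofReal_comp.add (him.ofReal_comp.mul_const Complex.I)

lemma sq_le_one_of_mem_uIcc {s : ℝ} (hs : s ∈ [[-1, 1]]) : s ^ 2 ≤ 1 := by
  rw [Set.uIcc_of_le (by norm_num), Set.mem_Icc, ← abs_le] at hs
  exact (sq_le_one_iff_abs_le_one s).mpr hs

lemma cubicCurve_mem_slitPlane {s : ℝ} (hs : s ^ 2 ≤ 1) : cubicCurve s ∈ Complex.slitPlane := by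
  rw [Complex.mem_slitPlane_iff]
  rcases hs.lt_or_eq with hlt | heq
  · exact .inl (mul_pos (by positivity) (sub_pos.mpr hlt))
  · right
    change 3 * s - s ^ 3 ≠ 0
    have him : 3 * s - s ^ 3 = 2 * s := by linear_combination -s * heq
    have hs_ne : s ≠ 0 := by
      rintro rfl
      norm_num at heq
    rw [him]
    exact mul_ne_zero two_ne_zero hs_ne

lemma im_deriv_cubicCurve_div (s : ℝ) :
    ((⟨-(2 * √3 * s), 3 - 3 * s ^ 2⟩ : ℂ) / cubicCurve s).im =
      √3 * ((3 + s ^ 4) / (4 - (1 - s ^ 2) ^ 3)) := by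
  rw [Complex.div_im, normSq_cubicCurve, cubicCurve]
  ring

lemma integral_rational_eq_pi_div_sqrt_three :
    ∫ s in (-1 : ℝ)..1, (3 + s ^ 4) / (4 - (1 - s ^ 2) ^ 3) = π / √3 := by
  have arg_end : (cubicCurve 1).arg = π / 2 :=
    Complex.arg_eq_pi_div_two_iff.mpr (by norm_num [cubicCurve])
  have arg_start : (cubicCurve (-1)).arg = -(π / 2) :=
    Complex.arg_eq_neg_pi_div_two_iff.mpr (by norm_num [cubicCurve])
  have velocity_continuous :
      Continuous fun s : ℝ ↦ (⟨-(2 * √3 * s), 3 - 3 * s ^ 2⟩ : ℂ) := by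
    simp only [Complex.mk_eq_add_mul_I]
    fun_prop
  have winding := integral_im_deriv_div (a := -1) (b := 1) (fun s _ ↦ hasDerivAt_cubicCurve s)
    velocity_continuous.continuousOn
    fun s hs ↦ cubicCurve_mem_slitPlane (sq_le_one_of_mem_uIcc hs)
  simp only [im_deriv_cubicCurve_div, intervalIntegral.integral_const_mul,
    arg_end, arg_start] at winding
  rw [eq_div_iff (by positivity), mul_comm, winding]
  ring

lemma norm_one_sub_sq_pow_three_div_four_lt_one {s : ℝ} (hs : s ^ 2 ≤ 1) :
    ‖(1 - s ^ 2) ^ 3 / 4‖ < 1 := by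
  have hu : 0 ≤ 1 - s ^ 2 := sub_nonneg.mpr hs
  have hu3 : (1 - s ^ 2) ^ 3 ≤ 1 := pow_le_one₀ hu (sub_le_self 1 (sq_nonneg s))
  rw [Real.norm_of_nonneg (by positivity)]
  linarith

theorem stmt_0 :
    5 * Real.pi / (4 * Real.sqrt 3) =
      ∑' k : ℕ, (1/4 : ℝ) ^ k * (risingFactorial (1/3) k * risingFactorial (1) k * risingFactorial (5/3) k) /
        (risingFactorial (7/6) k * risingFactorial (3/2) k * risingFactorial (11/6) k) * (3 * (k:ℝ) + 2) := by
  have integrand_eq (s : ℝ) :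
      (1 - (1 - s ^ 2) / 2 + (1 - s ^ 2) ^ 2 / 4) / (1 - (1 - s ^ 2) ^ 3 / 4) =
        (3 + s ^ 4) / (4 - (1 - s ^ 2) ^ 3) := by
    rw [← mul_div_mul_left _ _ four_ne_zero]
    ring
  have series := (hasSum_intervalIntegral_mul_pow (μ := volume)
    (f := fun s : ℝ ↦ 1 - (1 - s ^ 2) / 2 + (1 - s ^ 2) ^ 2 / 4)
    (by fun_prop) (by fun_prop) fun s hs ↦
      norm_one_sub_sq_pow_three_div_four_lt_one (sq_le_one_of_mem_uIcc hs)).mul_left (5 / 4)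
  simp only [integrand_eq, integral_rational_eq_pi_div_sqrt_three, ← summand_eq_integral] at series
  rw [series.tsum_eq]
  ring
end

section
/- The infinite series identity 5√2 = Σ_{k=0}^{∞} (-1/4)^k · [(-1/8)_k (1/4)_k (3/8)_k] / [(1)_k (9/8)_k (13/8)_k] · (40k + 7) holds, where the sum is over natural numbers k and all quantities are real numbers. -/
/-!
For `0 < a < 1 / 4` the beta integral `B(2a, 1/2 - 2a)` can be evaluated in two ways. Legendre's
duplication formula turns it into `4 ^ (2a) * B(2a, 1 - 4a)`. The substitution
`u = x / (1 - x/2 + x²/2)²` turns it into the integral over `[0, 1]` of `(1 + x²/4) ^ (-(2a + 1/2))`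
against the weight `x ^ (2a - 1) * (1 - x) ^ (-4a) * (1 + 3x/2)`; expanding the power in a binomial
series, the two beta integrals in each term combine into the factor `5k + a + 1`, and the
hypergeometric series with parameter `a` is found to sum to `16 ^ a * (1 - 2a)`. Both sides are
holomorphic in the half-plane `re a < 1 / 2`, where the identity persists; take `a = -1/8`.
-/

open Complex Filter MeasureTheory Polynomial ProbabilityTheory Set Topology
open scoped Nat

section Pochhammer

theorem risingFactorial_eq_ascPochhammer_eval (a : ℝ) (k : ℕ) :
    risingFactorial a k = (ascPochhammer ℝ k).eval a := by
  induction k with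
  | zero => simp [risingFactorial]
  | succ k ih =>
    rw [ascPochhammer_succ_eval, ← ih, risingFactorial, risingFactorial, Finset.prod_range_succ]

theorem ascPochhammer_eval_mul_add_natCast {R : Type*} [CommSemiring R] (a : R) (k : ℕ) :
    (ascPochhammer R k).eval a * (a + k) = a * (ascPochhammer R k).eval (a + 1) := by
  rw [← ascPochhammer_succ_eval, ascPochhammer_succ_left]
  simp

theorem ascPochhammer_eval_two_mul {K : Type*} [Field K] [NeZero (2 : K)] (a : K) (k : ℕ) :
    (ascPochhammer K (2 * k)).eval (2 * a) =
      4 ^ k * ((ascPochhammer K k).eval a * (ascPochhammer K k).eval (a + 1 / 2)) := by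
  have two_ne : (2 : K) ≠ 0 := two_ne_zero
  induction k with
  | zero => simp
  | succ k ih =>
    rw [show 2 * (k + 1) = 2 * k + 1 + 1 by ring]
    simp only [ascPochhammer_succ_eval, ih]
    push_cast
    field_simp
    ring

theorem norm_ascPochhammer_eval_le {K : Type*} [NormedField K] {a : K} {M : ℝ} (ha : ‖a‖ ≤ M)
    (k : ℕ) : ‖(ascPochhammer K k).eval a‖ ≤ (ascPochhammer ℝ k).eval M := by
  induction k with
  | zero => simp
  | succ k ih =>
    have norm_add_le : ‖a + k‖ ≤ M + k :=
      (norm_add_le a k).trans (add_le_add ha (by simpa using Nat.norm_cast_le (α := K) k))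
    rw [ascPochhammer_succ_eval, ascPochhammer_succ_eval, norm_mul]
    exact mul_le_mul ih norm_add_le (norm_nonneg _) ((norm_nonneg _).trans ih)

theorem norm_ascPochhammer_eval_le_eval_sub {z : ℂ} {b : ℝ} (hb : 0 ≤ b) (hz : z.re ≤ b / 2)
    (k : ℕ) : ‖(ascPochhammer ℂ k).eval z‖ ≤ ‖(ascPochhammer ℂ k).eval (b - z)‖ := by
  induction k with
  | zero => simp
  | succ k ih =>
    have norm_add_le : ‖z + k‖ ≤ ‖b - z + k‖ := by
      rw [← sq_le_sq₀ (norm_nonneg _) (norm_nonneg _), Complex.sq_norm, Complex.sq_norm,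
        normSq_apply, normSq_apply]
      have : 0 ≤ (b - 2 * z.re) * (b + 2 * k) :=
        mul_nonneg (by linarith) (by positivity)
      simp only [add_re, sub_re, ofReal_re, natCast_re, add_im, sub_im, ofReal_im, natCast_im]
      linarith
    simp only [ascPochhammer_succ_eval, norm_mul]
    gcongr

theorem ascPochhammer_eval_ne_zero_of_re_pos {z : ℂ} (hz : 0 < z.re) (k : ℕ) :
    (ascPochhammer ℂ k).eval z ≠ 0 := by
  rw [Ne, ascPochhammer_eval_eq_zero_iff]
  rintro ⟨n, -, hn⟩
  have re_eq : (n : ℝ) = -z.re := by simpa using congrArg re hn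
  linarith [n.cast_nonneg (α := ℝ)]

end Pochhammer

section BinomialSeries

theorem hasSum_one_sub_rpow_neg (b : ℝ) {y : ℝ} (hy : |y| < 1) :
    HasSum (fun k : ℕ ↦ (ascPochhammer ℝ k).eval b / k ! * y ^ k) ((1 - y) ^ (-b)) := by
  have coeff_eq (k : ℕ) : Ring.choose (b + k - 1) k = (ascPochhammer ℝ k).eval b / k ! := by
    rw [← Ring.multichoose_eq, eq_div_iff (by positivity), mul_comm, ← nsmul_eq_mul,
      Ring.factorial_nsmul_multichoose_eq_ascPochhammer, ascPochhammer_smeval_eq_eval]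
  have h := (Real.one_div_one_sub_rpow_hasFPowerSeriesOnBall_zero b).hasSum (y := y)
    (by simpa [enorm_eq_nnnorm, ← NNReal.coe_lt_one] using hy)
  have one_sub_pos : 0 < 1 - y := sub_pos.2 (abs_lt.1 hy).2
  simpa [coeff_eq, Real.rpow_neg one_sub_pos.le, mul_comm] using h

theorem hasSum_integral_one_sub_rpow_neg_mul {α : Type*} [MeasurableSpace α] {μ : Measure α}
    {y w : α → ℝ} {r : ℝ} (b : ℝ) (hr : 0 ≤ r) (hr' : r < 1) (hy : AEStronglyMeasurable y μ)
    (hyr : ∀ᵐ x ∂μ, |y x| ≤ r) (hw : Integrable w μ) :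
    HasSum (fun k : ℕ ↦ (ascPochhammer ℝ k).eval b / k ! * ∫ x, y x ^ k * w x ∂μ)
      (∫ x, (1 - y x) ^ (-b) * w x ∂μ) := by
  have bound_summable := (hasSum_one_sub_rpow_neg |b| ((abs_of_nonneg hr).trans_lt hr')).summable
  simp only [← integral_const_mul, ← mul_assoc]
  refine hasSum_integral_of_dominated_convergence
    (fun k x ↦ (ascPochhammer ℝ k).eval |b| / k ! * r ^ k * |w x|)
    (fun k ↦ ((hy.pow k).const_mul _).mul hw.1) (fun k ↦ ?_)
    (ae_of_all _ fun x ↦ bound_summable.mul_right _) ?_ ?_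
  · filter_upwards [hyr] with x hx
    have coeff_le := norm_ascPochhammer_eval_le (Real.norm_eq_abs b).le k
    simp only [norm_mul, norm_div, norm_pow, Real.norm_eq_abs, Nat.abs_cast] at coeff_le ⊢
    have eval_nonneg := (abs_nonneg _).trans coeff_le
    gcongr
  · simpa only [tsum_mul_right] using hw.abs.const_mul _
  · filter_upwards [hyr] with x hx
    exact (hasSum_one_sub_rpow_neg b (hx.trans_lt hr')).mul_right _

end BinomialSeries

section Beta

variable {a b : ℝ}

theorem integral_rpow_mul_one_sub_rpow (ha : 0 < a) (hb : 0 < b) :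
    ∫ x in Ioo (0 : ℝ) 1, x ^ (a - 1) * (1 - x) ^ (b - 1) = beta a b := by
  have cast_integrand : ∀ x ∈ Ioo (0 : ℝ) 1,
      (x : ℂ) ^ ((a : ℂ) - 1) * (1 - (x : ℂ)) ^ ((b : ℂ) - 1) =
        ((x ^ (a - 1) * (1 - x) ^ (b - 1) : ℝ) : ℂ) := by
    intro x hx
    rw [ofReal_mul, ofReal_cpow hx.1.le, ofReal_cpow (sub_nonneg.2 hx.2.le)]
    norm_cast
  rw [beta_eq_betaIntegralReal a b ha hb, betaIntegral,
    intervalIntegral.integral_of_le zero_le_one, integral_Ioc_eq_integral_Ioo,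
    setIntegral_congr_fun measurableSet_Ioo cast_integrand, integral_complex_ofReal, ofReal_re]

theorem integrableOn_rpow_mul_one_sub_rpow (ha : 0 < a) (hb : 0 < b) :
    IntegrableOn (fun x : ℝ ↦ x ^ (a - 1) * (1 - x) ^ (b - 1)) (Ioo 0 1) := by
  refine not_imp_comm.1 integral_undef ?_
  rw [integral_rpow_mul_one_sub_rpow ha hb]
  exact (beta_pos ha hb).ne'

theorem beta_add_one_left (ha : a ≠ 0) (hab : a + b ≠ 0) :
    beta (a + 1) b = a / (a + b) * beta a b := by
  rw [beta, beta, Real.Gamma_add_one ha, add_right_comm, Real.Gamma_add_one hab,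
    div_mul_div_comm, mul_assoc]

theorem beta_add_natCast_left (ha : 0 < a) (hb : 0 < b) (n : ℕ) :
    beta (a + n) b =
      (ascPochhammer ℝ n).eval a / (ascPochhammer ℝ n).eval (a + b) * beta a b := by
  induction n with
  | zero => simp
  | succ n ih =>
    rw [Nat.cast_succ, ← add_assoc, beta_add_one_left (by positivity) (by positivity), ih,
      ascPochhammer_succ_eval, ascPochhammer_succ_eval, add_right_comm a b, mul_div_mul_comm]
    ring

theorem beta_two_mul_add_natCast (ha : 0 < a) (ha' : a < 1 / 4) (k : ℕ) :
    beta (2 * a + (2 * k : ℕ)) (1 - 2 * (2 * a)) =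
      (ascPochhammer ℝ k).eval a / (ascPochhammer ℝ k).eval (1 - a) *
        ((ascPochhammer ℝ k).eval (a + 1 / 2) / (ascPochhammer ℝ k).eval (3 / 2 - a)) *
          ((1 - 2 * a + 2 * k) / (1 - 2 * a)) * beta (2 * a) (1 - 2 * (2 * a)) := by
  have half_shift := ascPochhammer_eval_mul_add_natCast (1 / 2 - a) k
  rw [show 1 / 2 - a + 1 = 3 / 2 - a by ring] at half_shift
  set c : ℝ := 1 - 2 * a with hc
  have c_pos : 0 < c := by linarith
  have half_sub_eq : (ascPochhammer ℝ k).eval (1 / 2 - a) =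
      c * (ascPochhammer ℝ k).eval (3 / 2 - a) / (c + 2 * k) :=
    eq_div_of_mul_eq (by positivity) (by rw [hc]; linear_combination 2 * half_shift)
  rw [beta_add_natCast_left (by positivity) (by linarith), ascPochhammer_eval_two_mul,
    show 2 * a + (1 - 2 * (2 * a)) = 2 * (1 / 2 - a) by ring, ascPochhammer_eval_two_mul,
    show 1 / 2 - a + 1 / 2 = 1 - a by ring, half_sub_eq]
  field_simp

theorem beta_half_sub (ha : a < 1 / 2) :
    beta a (1 / 2 - a) = 4 ^ a * beta a (1 - 2 * a) := by
  have duplication := Real.Gamma_mul_Gamma_add_half (1 / 2 - a)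
  rw [show 1 / 2 - a + 1 / 2 = 1 - a by ring, show 2 * (1 / 2 - a) = 1 - 2 * a by ring,
    show 1 - (1 - 2 * a) = 2 * a by ring, Real.rpow_mul zero_le_two] at duplication
  have Gamma_ne : Real.Gamma (1 - a) ≠ 0 := (Real.Gamma_pos_of_pos (by linarith)).ne'
  have quotient : Real.Gamma (1 / 2 - a) / √Real.pi =
      4 ^ a * Real.Gamma (1 - 2 * a) / Real.Gamma (1 - a) := by
    rw [div_eq_div_iff (by positivity) Gamma_ne, duplication,
      show (2 : ℝ) ^ (2 : ℝ) = 4 by norm_num]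
    ring
  rw [beta, beta, show a + (1 / 2 - a) = 1 / 2 by ring, show a + (1 - 2 * a) = 1 - a by ring,
    Real.Gamma_one_half_eq]
  linear_combination Real.Gamma a * quotient

end Beta

section QuarticSubstitution

/-- The quadratic factor in the denominator of `quarticSubst`. -/
noncomputable def quarticDenom (x : ℝ) : ℝ := 1 - x / 2 + x ^ 2 / 2

/-- The substitution `u = x / (1 - x / 2 + x ^ 2 / 2) ^ 2`, an increasing map of `[0, 1]` onto
itself. It is chosen so that `1 - u` is, up to squares, `1 + x ^ 2 / 4`. -/
noncomputable def quarticSubst (x : ℝ) : ℝ := x / quarticDenom x ^ 2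

/-- The weight against which the beta integral with exponents `a` and `1 / 2 - a` becomes, under
`quarticSubst`, the integral of a power of `1 + x ^ 2 / 4`. -/
noncomputable def quarticWeight (a x : ℝ) : ℝ :=
  x ^ (a - 1) * (1 - x) ^ (1 - 2 * a - 1) * (1 + 3 / 2 * x)

variable {a x : ℝ}

theorem quarticDenom_pos (x : ℝ) : 0 < quarticDenom x := by
  rw [quarticDenom]
  nlinarith [sq_nonneg (x - 1 / 2)]

theorem one_sub_quarticSubst (x : ℝ) :
    1 - quarticSubst x = (1 - x) ^ 2 * (1 + x ^ 2 / 4) / quarticDenom x ^ 2 := by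
  rw [quarticSubst, one_sub_div (pow_ne_zero 2 (quarticDenom_pos x).ne')]
  congr 1
  rw [quarticDenom]
  ring

theorem hasDerivAt_quarticDenom (x : ℝ) : HasDerivAt quarticDenom (x - 1 / 2) x := by
  refine ((((hasDerivAt_id x).div_const 2).const_sub 1).add
    ((hasDerivAt_pow 2 x).div_const 2)).congr_deriv ?_
  norm_num
  ring

theorem hasDerivAt_quarticSubst (x : ℝ) :
    HasDerivAt quarticSubst ((1 - x) * (1 + 3 / 2 * x) / quarticDenom x ^ 3) x := by
  have denom_ne := (quarticDenom_pos x).ne'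
  refine ((hasDerivAt_id x).div ((hasDerivAt_quarticDenom x).pow 2)
    (pow_ne_zero 2 denom_ne)).congr_deriv ?_
  simp only [id, Pi.pow_apply]
  rw [div_eq_div_iff (by positivity) (by positivity)]
  simp only [quarticDenom]
  ring

theorem deriv_quarticSubst_mul_beta_density (a : ℝ) (hx : x ∈ Ioo 0 1) :
    (1 - x) * (1 + 3 / 2 * x) / quarticDenom x ^ 3 *
        (quarticSubst x ^ (a - 1) * (1 - quarticSubst x) ^ (1 / 2 - a - 1)) =
      (1 + x ^ 2 / 4) ^ (-(a + 1 / 2)) * quarticWeight a x := by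
  have one_sub_pos : 0 < 1 - x := sub_pos.2 hx.2
  have denom_pos := quarticDenom_pos x
  have denom_power : ((quarticDenom x ^ 2) ^ (a - 1) * (quarticDenom x ^ 2) ^ (1 / 2 - a - 1) *
      quarticDenom x ^ 3)⁻¹ = 1 := by
    rw [← Real.rpow_add (by positivity), ← Real.rpow_natCast_mul denom_pos.le,
      ← Real.rpow_natCast _ 3, ← Real.rpow_add denom_pos, inv_eq_one]
    convert Real.rpow_zero _ using 2
    push_cast
    ring
  have one_sub_power :
      ((1 - x) ^ 2) ^ (1 / 2 - a - 1) * (1 - x) = (1 - x) ^ (1 - 2 * a - 1) := by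
    rw [← Real.rpow_natCast_mul one_sub_pos.le, ← Real.rpow_add_one one_sub_pos.ne']
    congr 1
    push_cast
    ring
  rw [quarticWeight, one_sub_quarticSubst, quarticSubst, Real.div_rpow hx.1.le (by positivity),
    Real.div_rpow (by positivity) (by positivity), Real.mul_rpow (by positivity) (by positivity),
    ← one_sub_power, show -(a + 1 / 2) = 1 / 2 - a - 1 by ring]
  linear_combination ((1 + x ^ 2 / 4) ^ (1 / 2 - a - 1) * x ^ (a - 1) *
    ((1 - x) ^ 2) ^ (1 / 2 - a - 1) * (1 - x) * (1 + 3 / 2 * x)) * denom_power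

theorem integrableOn_quarticWeight (ha : 0 < a) (ha' : a < 1 / 2) :
    IntegrableOn (quarticWeight a) (Ioo 0 1) := by
  have density := integrableOn_rpow_mul_one_sub_rpow ha (b := 1 - 2 * a) (by linarith)
  rw [← integrableOn_Icc_iff_integrableOn_Ioo] at density ⊢
  exact density.mul_continuousOn (by fun_prop) isCompact_Icc

theorem integral_pow_mul_quarticWeight (ha : 0 < a) (ha' : a < 1 / 2) (n : ℕ) :
    ∫ x in Ioo (0 : ℝ) 1, x ^ n * quarticWeight a x =
      (1 + 3 / 2 * ((a + n) / (a + n + (1 - 2 * a)))) * beta (a + n) (1 - 2 * a) := by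
  have one_sub_two_mul_pos : 0 < 1 - 2 * a := by linarith
  have split_integrand : ∀ x ∈ Ioo (0 : ℝ) 1, x ^ n * quarticWeight a x =
      x ^ (a + n - 1) * (1 - x) ^ (1 - 2 * a - 1) +
        3 / 2 * (x ^ (a + n + 1 - 1) * (1 - x) ^ (1 - 2 * a - 1)) := by
    intro x hx
    rw [quarticWeight, show a + n - 1 = a - 1 + n by ring,
      show a + n + 1 - 1 = a - 1 + (n + 1 : ℕ) by push_cast; ring,
      Real.rpow_add_natCast hx.1.ne', Real.rpow_add_natCast hx.1.ne']
    ring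
  rw [setIntegral_congr_fun measurableSet_Ioo split_integrand,
    integral_add (integrableOn_rpow_mul_one_sub_rpow (by positivity) one_sub_two_mul_pos)
      ((integrableOn_rpow_mul_one_sub_rpow (by positivity) one_sub_two_mul_pos).const_mul _),
    integral_const_mul, integral_rpow_mul_one_sub_rpow (by positivity) one_sub_two_mul_pos,
    integral_rpow_mul_one_sub_rpow (by positivity) one_sub_two_mul_pos,
    beta_add_one_left (by positivity) (by positivity)]
  ring

theorem integral_one_add_sq_rpow_mul_quarticWeight (ha : 0 < a) (ha' : a < 1 / 2) :
    ∫ x in Ioo (0 : ℝ) 1, (1 + x ^ 2 / 4) ^ (-(a + 1 / 2)) * quarticWeight a x =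
      beta a (1 / 2 - a) := by
  rw [← integral_rpow_mul_one_sub_rpow ha (sub_pos.2 ha'),
    ← setIntegral_congr_fun measurableSet_Ioo fun x hx ↦ deriv_quarticSubst_mul_beta_density a hx]
  have change_of_variables := integral_Icc_deriv_smul_of_deriv_nonneg
    (g := fun u : ℝ ↦ u ^ (a - 1) * (1 - u) ^ (1 / 2 - a - 1))
    (fun x _ ↦ (hasDerivAt_quarticSubst x).continuousAt.continuousWithinAt)
    (fun x _ ↦ hasDerivAt_quarticSubst x) (fun x hx ↦ ?_) (zero_le_one' ℝ)
  · simpa [quarticSubst, quarticDenom, integral_Icc_eq_integral_Ioo] using change_of_variables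
  · have denom_pos := quarticDenom_pos x
    have one_sub_pos : 0 < 1 - x := sub_pos.2 hx.2
    have x_pos := hx.1
    positivity

end QuarticSubstitution

section Series

/-- The `k`-th term of the hypergeometric series with parameter `a`, over an arbitrary field so
that an identity between real values can be continued analytically to complex ones. -/
noncomputable def seriesTerm {K : Type*} [Field K] (a : K) (k : ℕ) : K :=
  (-1 / 4) ^ k * ((ascPochhammer K k).eval a / (ascPochhammer K k).eval (1 - a)) *
    ((ascPochhammer K k).eval (2 * a + 1 / 2) / k !) *
      ((ascPochhammer K k).eval (a + 1 / 2) / (ascPochhammer K k).eval (3 / 2 - a)) *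
        (5 * k + a + 1)

theorem ofReal_seriesTerm (a : ℝ) (k : ℕ) : ((seriesTerm a k : ℝ) : ℂ) = seriesTerm (a : ℂ) k := by
  have ofReal_eval (b : ℝ) :
      (((ascPochhammer ℝ k).eval b : ℝ) : ℂ) = (ascPochhammer ℂ k).eval (b : ℂ) := by
    rw [← ascPochhammer_map ofRealHom, eval_map, ← ofRealHom_eq_coe b, eval₂_at_apply]
    rfl
  simp [seriesTerm, ofReal_eval]

theorem ofReal_sixteen_rpow_mul_one_sub (a : ℝ) :
    ((16 ^ a * (1 - 2 * a) : ℝ) : ℂ) = 16 ^ (a : ℂ) * (1 - 2 * a) := by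
  simp [ofReal_cpow]

theorem integral_binomial_term_mul_quarticWeight {a : ℝ} (ha : 0 < a) (ha' : a < 1 / 4) (k : ℕ) :
    (ascPochhammer ℝ k).eval (2 * a + 1 / 2) / k ! *
        ∫ x in Ioo (0 : ℝ) 1, (-(x ^ 2 / 4)) ^ k * quarticWeight (2 * a) x =
      beta (2 * a) (1 - 2 * (2 * a)) / (1 - 2 * a) * seriesTerm a k := by
  have pow_eq (x : ℝ) : (-(x ^ 2 / 4)) ^ k = (-1 / 4) ^ k * x ^ (2 * k) := by
    rw [pow_mul, ← mul_pow]
    ring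
  have shift_pos : 0 < 1 - 2 * a + 2 * k := by
    have := k.cast_nonneg (α := ℝ)
    linarith
  have shift_factor : 1 + 3 / 2 * ((2 * a + (2 * k : ℕ)) /
      (2 * a + (2 * k : ℕ) + (1 - 2 * (2 * a)))) = (5 * k + a + 1) / (1 - 2 * a + 2 * k) := by
    rw [show 2 * a + (2 * k : ℕ) + (1 - 2 * (2 * a)) = 1 - 2 * a + 2 * k by push_cast; ring,
      eq_div_iff shift_pos.ne', add_mul, mul_assoc, div_mul_cancel₀ _ shift_pos.ne']
    push_cast
    ring
  have shift_cancel : (5 * k + a + 1) / (1 - 2 * a + 2 * k) *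
      ((1 - 2 * a + 2 * k) / (1 - 2 * a)) = (5 * k + a + 1) / (1 - 2 * a) :=
    div_mul_div_cancel₀ shift_pos.ne'
  simp only [pow_eq, mul_assoc ((-1 / 4 : ℝ) ^ k)]
  rw [integral_const_mul, integral_pow_mul_quarticWeight (by positivity) (by linarith),
    beta_two_mul_add_natCast ha ha', shift_factor, seriesTerm]
  linear_combination ((ascPochhammer ℝ k).eval (2 * a + 1 / 2) / k ! * (-1 / 4) ^ k *
    ((ascPochhammer ℝ k).eval a / (ascPochhammer ℝ k).eval (1 - a) *
      ((ascPochhammer ℝ k).eval (a + 1 / 2) / (ascPochhammer ℝ k).eval (3 / 2 - a))) *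
        beta (2 * a) (1 - 2 * (2 * a))) * shift_cancel

theorem hasSum_seriesTerm_of_pos {a : ℝ} (ha : 0 < a) (ha' : a < 1 / 4) :
    HasSum (seriesTerm a) ((16 : ℝ) ^ a * (1 - 2 * a)) := by
  have sq_div_four_le : ∀ᵐ x ∂volume.restrict (Ioo (0 : ℝ) 1), |-(x ^ 2 / 4)| ≤ 1 / 4 := by
    filter_upwards [ae_restrict_mem measurableSet_Ioo] with x hx
    rw [abs_neg, abs_of_nonneg (by positivity)]
    linarith [pow_le_one₀ hx.1.le hx.2.le (n := 2)]
  have hasSum_moments := hasSum_integral_one_sub_rpow_neg_mul (2 * a + 1 / 2) (by norm_num)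
    (by norm_num) (by fun_prop) sq_div_four_le
    (integrableOn_quarticWeight (a := 2 * a) (by positivity) (by linarith))
  have beta_value := integral_one_add_sq_rpow_mul_quarticWeight (a := 2 * a) (by positivity)
    (by linarith)
  rw [beta_half_sub (by linarith), Real.rpow_mul (by norm_num)] at beta_value
  simp only [integral_binomial_term_mul_quarticWeight ha ha', sub_neg_eq_add, beta_value]
    at hasSum_moments
  have beta_pos := beta_pos (α := 2 * a) (β := 1 - 2 * (2 * a)) (by positivity) (by linarith)
  have one_sub_pos : 0 < 1 - 2 * a := by linarith
  have value_eq : beta (2 * a) (1 - 2 * (2 * a)) / (1 - 2 * a) * (16 ^ a * (1 - 2 * a)) =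
      (4 ^ (2 : ℝ)) ^ a * beta (2 * a) (1 - 2 * (2 * a)) := by
    rw [show (4 : ℝ) ^ (2 : ℝ) = 16 by norm_num, mul_comm (16 ^ a), ← mul_assoc,
      div_mul_cancel₀ _ one_sub_pos.ne', mul_comm]
  rw [← hasSum_mul_left_iff (div_pos beta_pos one_sub_pos).ne', value_eq]
  exact hasSum_moments

section Continuation

variable {z : ℂ}

-- Since `(b)_k * (b + k) = b * (b + 1)_k`, the linear factor of the term only raises the parameter
-- of the bound, which remains a binomial series at `1 / 4`.
theorem norm_seriesTerm_le {M : ℝ} (hz : z.re ≤ 1 / 2) (hM : ‖z‖ ≤ M) (k : ℕ) :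
    ‖seriesTerm z k‖ ≤ 5 * (2 * M + 1 / 2) *
      ((ascPochhammer ℝ k).eval (2 * M + 1 / 2 + 1) / k ! * (1 / 4) ^ k) := by
  have M_nonneg : 0 ≤ M := (norm_nonneg z).trans hM
  have ratio_le : ‖(ascPochhammer ℂ k).eval z / (ascPochhammer ℂ k).eval (1 - z)‖ ≤ 1 := by
    rw [norm_div]
    refine div_le_one_of_le₀ ?_ (norm_nonneg _)
    simpa using norm_ascPochhammer_eval_le_eval_sub zero_le_one hz k
  have half_ratio_le :
      ‖(ascPochhammer ℂ k).eval (z + 1 / 2) / (ascPochhammer ℂ k).eval (3 / 2 - z)‖ ≤ 1 := by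
    have reflect := norm_ascPochhammer_eval_le_eval_sub (z := z + 1 / 2) zero_le_two
      (by norm_num; linarith) k
    rw [show ((2 : ℝ) : ℂ) - (z + 1 / 2) = 3 / 2 - z by push_cast; ring] at reflect
    rw [norm_div]
    exact div_le_one_of_le₀ reflect (norm_nonneg _)
  have eval_le : ‖(ascPochhammer ℂ k).eval (2 * z + 1 / 2) / (k ! : ℂ)‖ ≤
      (ascPochhammer ℝ k).eval (2 * M + 1 / 2) / k ! := by
    rw [norm_div, Complex.norm_natCast]
    gcongr
    exact norm_ascPochhammer_eval_le ((norm_add_le _ _).trans (by simpa using hM)) k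
  have linear_le : ‖5 * (k : ℂ) + z + 1‖ ≤ 5 * (2 * M + 1 / 2 + k) := by
    calc ‖5 * (k : ℂ) + z + 1‖ ≤ ‖5 * (k : ℂ)‖ + ‖z‖ + ‖(1 : ℂ)‖ := norm_add₃_le
      _ ≤ 5 * k + M + 1 := by simpa using hM
      _ ≤ 5 * (2 * M + 1 / 2 + k) := by linarith
  have shift := ascPochhammer_eval_mul_add_natCast (2 * M + 1 / 2) k
  calc ‖seriesTerm z k‖ ≤ (1 / 4) ^ k * 1 * ((ascPochhammer ℝ k).eval (2 * M + 1 / 2) / k !) * 1 *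
        (5 * (2 * M + 1 / 2 + k)) := by
        have eval_nonneg := (norm_nonneg _).trans eval_le
        have base_norm : ‖(-1 / 4 : ℂ)‖ ≤ 1 / 4 := by norm_num
        rw [seriesTerm, norm_mul, norm_mul, norm_mul, norm_mul, norm_pow]
        gcongr
    _ = _ := by linear_combination (5 * (1 / 4) ^ k / (k ! : ℝ)) * shift

theorem summable_seriesTerm_bound (M : ℝ) :
    Summable fun k : ℕ ↦ 5 * (2 * M + 1 / 2) *
      ((ascPochhammer ℝ k).eval (2 * M + 1 / 2 + 1) / k ! * (1 / 4) ^ k) :=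
  (hasSum_one_sub_rpow_neg _ (by norm_num)).summable.mul_left _

theorem differentiableAt_seriesTerm (hz : z.re < 1) (k : ℕ) :
    DifferentiableAt ℂ (fun w ↦ seriesTerm w k) z := by
  have one_sub_ne := ascPochhammer_eval_ne_zero_of_re_pos (z := 1 - z) (by simpa using hz) k
  have three_half_sub_ne :=
    ascPochhammer_eval_ne_zero_of_re_pos (z := 3 / 2 - z) (by norm_num; linarith) k
  have eval_differentiable {f : ℂ → ℂ} (hf : DifferentiableAt ℂ f z) :
      DifferentiableAt ℂ (fun w ↦ (ascPochhammer ℂ k).eval (f w)) z :=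
    (ascPochhammer ℂ k).differentiableAt.comp z hf
  unfold seriesTerm
  fun_prop (disch := assumption)

theorem differentiableOn_tsum_seriesTerm :
    DifferentiableOn ℂ (fun w ↦ ∑' k, seriesTerm w k) {w : ℂ | w.re < 1 / 2} := by
  intro z hz
  set U : Set ℂ := {w : ℂ | w.re < 1 / 2} ∩ Metric.ball 0 (‖z‖ + 1)
  have U_open : IsOpen U := (isOpen_lt continuous_re continuous_const).inter Metric.isOpen_ball
  have z_mem : z ∈ U := ⟨hz, by simp⟩
  refine ((differentiableOn_tsum_of_summable_norm (summable_seriesTerm_bound (‖z‖ + 1))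
    (fun k w hw ↦ ?_) U_open fun k w hw ↦ ?_).differentiableAt
      (U_open.mem_nhds z_mem)).differentiableWithinAt
  · exact (differentiableAt_seriesTerm (hw.1.trans one_half_lt_one) k).differentiableWithinAt
  · exact norm_seriesTerm_le hw.1.le (mem_ball_zero_iff.1 hw.2).le k

theorem hasSum_seriesTerm (hz : z.re < 1 / 2) :
    HasSum (seriesTerm z) (16 ^ z * (1 - 2 * z)) := by
  have half_plane_open : IsOpen {w : ℂ | w.re < 1 / 2} := isOpen_lt continuous_re continuous_const
  have real_near : ∀ᶠ x : ℝ in 𝓝[≠] (1 / 8), x ∈ Ioo 0 (1 / 4) :=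
    nhdsWithin_le_nhds (Ioo_mem_nhds (by norm_num) (by norm_num))
  have ofReal_tendsto : Tendsto ofReal (𝓝[≠] (1 / 8)) (𝓝[≠] ((1 / 8 : ℝ) : ℂ)) :=
    continuous_ofReal.continuousWithinAt.tendsto_nhdsWithin fun x hx ↦ ofReal_injective.ne hx
  have eq_near : ∃ᶠ w in 𝓝[≠] ((1 / 8 : ℝ) : ℂ),
      ∑' k, seriesTerm w k = 16 ^ w * (1 - 2 * w) := by
    refine ofReal_tendsto.frequently (real_near.mono fun x hx ↦ ?_).frequently
    rw [← ofReal_sixteen_rpow_mul_one_sub,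
      ← (hasSum_ofReal.2 (hasSum_seriesTerm_of_pos hx.1 hx.2)).tsum_eq]
    simp only [ofReal_seriesTerm]
  have analytic_rhs : AnalyticOnNhd ℂ (fun w : ℂ ↦ 16 ^ w * (1 - 2 * w)) {w : ℂ | w.re < 1 / 2} :=
    DifferentiableOn.analyticOnNhd (by fun_prop (disch := norm_num)) half_plane_open
  have tsum_eq : ∑' k, seriesTerm z k = 16 ^ z * (1 - 2 * z) :=
    AnalyticOnNhd.eqOn_of_preconnected_of_frequently_eq
      (differentiableOn_tsum_seriesTerm.analyticOnNhd half_plane_open) analytic_rhs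
      (convex_halfSpace_re_lt _).isPreconnected (by norm_num) eq_near hz
  rw [← tsum_eq]
  exact (Summable.of_norm_bounded (summable_seriesTerm_bound ‖z‖)
    (norm_seriesTerm_le hz.le le_rfl)).hasSum

end Continuation

end Series

theorem stmt_5_general {a : ℝ} (ha : a < 1 / 2) :
    HasSum (fun k : ℕ ↦ (-1 / 4 : ℝ) ^ k *
        (risingFactorial a k * risingFactorial (2 * a + 1 / 2) k *
          risingFactorial (a + 1 / 2) k) /
        (risingFactorial 1 k * risingFactorial (1 - a) k * risingFactorial (3 / 2 - a) k) *
        (5 * k + a + 1))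
      (16 ^ a * (1 - 2 * a)) := by
  rw [← hasSum_ofReal, ofReal_sixteen_rpow_mul_one_sub]
  convert hasSum_seriesTerm (z := a) (by simpa using ha) using 2 with k
  rw [← ofReal_seriesTerm, seriesTerm, ← ascPochhammer_eval_one]
  simp only [risingFactorial_eq_ascPochhammer_eval]
  congr 1
  ring

theorem sixteen_rpow_neg_one_div_eight : (16 : ℝ) ^ (-1 / 8 : ℝ) = (√2)⁻¹ := by
  rw [show (16 : ℝ) = 2 ^ (4 : ℝ) by norm_num, ← Real.rpow_mul zero_le_two, Real.sqrt_eq_rpow,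
    ← Real.rpow_neg zero_le_two]
  norm_num

theorem stmt_5 :
    5 * Real.sqrt 2 =
      ∑' k : ℕ, (-1/4 : ℝ) ^ k * (risingFactorial (-1/8) k * risingFactorial (1/4) k * risingFactorial (3/8) k) /
        (risingFactorial (1) k * risingFactorial (9/8) k * risingFactorial (13/8) k) * (40 * (k:ℝ) + 7) := by
  calc 5 * √2 = 8 * (16 ^ (-1 / 8 : ℝ) * (1 - 2 * (-1 / 8))) := by
        rw [sixteen_rpow_neg_one_div_eight]
        field_simp
        norm_num
    _ = _ := by
        rw [← ((stmt_5_general (a := -1 / 8) (by norm_num)).mul_left 8).tsum_eq]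
        refine tsum_congr fun k ↦ ?_
        norm_num
        ring
end
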